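/- arXiv:2303.16525 — 2 statements merged into one kernel-verified Lean document; each statement's English description precedes it below -/
import Mathlib

section
/- For any radius ρ > 0 and any sequence ξ = (ξ_α)_{α ∈ ℕⁿ} of complex numbers with ∑_α |ξ_α| ρ^{|α|} < ∞ for all ρ > 0, and any holomorphic function F on a domain D ⊆ ℂⁿ, the series (ξ·F)(z) := ∑_{α ∈ ℕⁿ} ξ_α F^{(α)}(z)/α! converges absolutely for every z ∈ D, and the resulting function z ↦ (ξ·F)(z) is holomorphic on D. -/
/-!
By Cauchy's estimates on a polydisc of radius `r` around `z`, `|F^{(α)}(z)| / α! ≤ M / r^{|α|}`,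
so summability of `|ξ_α| ρ^{|α|}` at `ρ = 1 / r` gives a Weierstrass majorant near each point of
`D`, and a uniform limit of holomorphic functions is holomorphic. That theorem also shows that
partial derivatives of holomorphic functions are holomorphic: by the second-order Schwarz lemma
the difference quotients converge to them locally uniformly.
-/

open MeasureTheory Filter Topology Complex
open scoped ENNReal
noncomputable section

/-- The total degree `|α|` of a multi-index. -/
def mdeg {n : ℕ} (α : Fin n → ℕ) : ℕ := ∑ i, α i

/-- The factorial `α!` of a multi-index. -/
def mfact {n : ℕ} (α : Fin n → ℕ) : ℕ := ∏ i, Nat.factorial (α i)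

/-- Partial derivative in the `i`-th coordinate direction. -/
def pderivC {n : ℕ} (i : Fin n) (f : (Fin n → ℂ) → ℂ) : (Fin n → ℂ) → ℂ :=
  fun z => deriv (fun t : ℂ => f (Function.update z i t)) (z i)

/-- Iterated partial derivative `∂^{|α|} f / ∂z^α`. -/
def multiDeriv {n : ℕ} (α : Fin n → ℕ) (f : (Fin n → ℂ) → ℂ) : (Fin n → ℂ) → ℂ :=
  (List.finRange n).foldr (fun i g => (pderivC i)^[α i] g) f

/-- Membership in `ℓ₁^{(n)}`: `∑_α |ξ_α| ρ^{|α|} < ∞` for every `ρ > 0`. -/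
def MemL1 {n : ℕ} (ξ : (Fin n → ℕ) → ℂ) : Prop :=
  ∀ ρ : ℝ, 0 < ρ → Summable fun α : Fin n → ℕ => ‖ξ α‖ * ρ ^ mdeg α

/-- The action `(ξ·f)(z) = ∑_α ξ_α f^{(α)}(z)/α!`. -/
def xiAct {n : ℕ} (ξ : (Fin n → ℕ) → ℂ) (f : (Fin n → ℂ) → ℂ) (z : Fin n → ℂ) : ℂ :=
  ∑' α : Fin n → ℕ, ξ α * multiDeriv α f z / (mfact α : ℂ)

/-- Plurisubharmonicity of an `EReal`-valued function on a set: upper semicontinuity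
together with the sub-mean value inequality on every complex circle whose closed disc
is contained in the set (expressed via integrable real-valued majorants). -/
def PlurisubharmonicOn {E : Type*} [NormedAddCommGroup E] [NormedSpace ℂ E]
    (f : E → EReal) (s : Set E) : Prop :=
  UpperSemicontinuousOn f s ∧
  ∀ z ∈ s, ∀ v : E, (∀ t : ℂ, ‖t‖ ≤ 1 → z + t • v ∈ s) →
    ∀ g : ℝ → ℝ, IntervalIntegrable g volume 0 (2 * Real.pi) →
      (∀ θ : ℝ, f (z + Complex.exp (θ * Complex.I) • v) ≤ (g θ : EReal)) →
      f z ≤ (((2 * Real.pi)⁻¹ * ∫ θ in (0:ℝ)..(2 * Real.pi), g θ : ℝ) : EReal)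

/-- The weighted `L²` integral `∫_D |f|² e^{-ψ}`. -/
def wL2 {n : ℕ} (D : Set (Fin n → ℂ)) (ψ : (Fin n → ℂ) → ℝ) (f : (Fin n → ℂ) → ℂ) : ℝ≥0∞ :=
  ∫⁻ z in D, ENNReal.ofReal (‖f z‖ ^ 2 * Real.exp (-ψ z))

/-- Membership in the weighted Bergman space `A²(D, e^{-ψ})`. -/
def MemA2 {n : ℕ} (D : Set (Fin n → ℂ)) (ψ : (Fin n → ℂ) → ℝ) (f : (Fin n → ℂ) → ℂ) : Prop :=
  DifferentiableOn ℂ f D ∧ wL2 D ψ f < ⊤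

/-- The weighted `ξ`-Bergman kernel `K^ψ_{ξ,D}(z)`. -/
def xiBergman {n : ℕ} (ξ : (Fin n → ℕ) → ℂ) (D : Set (Fin n → ℂ))
    (ψ : (Fin n → ℂ) → ℝ) (z : Fin n → ℂ) : ℝ≥0∞ :=
  ⨆ f : {f // MemA2 D ψ f}, ENNReal.ofReal (‖xiAct ξ f.1 z‖ ^ 2) / wL2 D ψ f.1

/-- The locally uniformly bounded property for a functional-valued function on `D`. -/
def LocUnifBdd {n m : ℕ} (ξ : (Fin m → ℂ) → (Fin n → ℕ) → ℂ) (D : Set (Fin m → ℂ)) : Prop :=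
  ∀ w ∈ D, ∀ ρ : ℝ, 0 < ρ → ∃ V ∈ 𝓝 w, ∃ C : ℝ,
    ∀ w' ∈ V ∩ D, (∑' α : Fin n → ℕ, ENNReal.ofReal (‖ξ w' α‖ * ρ ^ mdeg α)) ≤ ENNReal.ofReal C

section Local

open Metric

lemma eventually_norm_smul_lt {𝕜 E : Type*} [NormedField 𝕜] [SeminormedAddCommGroup E]
    [NormedSpace 𝕜 E] {R : ℝ} (hR : 0 < R) (v : E) : ∀ᶠ t : 𝕜 in 𝓝 0, ‖t • v‖ < R :=
  ((continuous_id.smul continuous_const).norm.tendsto' 0 0 (by simp)).eventually_lt_const hR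

lemma exists_ball_subset_forall_norm_le {X G : Type*} [PseudoMetricSpace X]
    [SeminormedAddCommGroup G] {f : X → G} {U : Set X} (hU : IsOpen U) (hf : ContinuousOn f U)
    {c : X} (hc : c ∈ U) : ∃ ε > 0, ∃ M, ball c ε ⊆ U ∧ ∀ w ∈ ball c ε, ‖f w‖ ≤ M := by
  have hbound : ∀ᶠ w in 𝓝 c, ‖f w‖ < ‖f c‖ + 1 :=
    (hf.continuousAt (hU.mem_nhds hc)).norm.eventually_lt_const (lt_add_one _)
  obtain ⟨ε, hε, hball⟩ := Metric.mem_nhds_iff.1 (inter_mem (hU.mem_nhds hc) hbound)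
  exact ⟨ε, hε, ‖f c‖ + 1, fun w hw => (hball hw).1, fun w hw => (hball hw).2.le⟩

end Local

section Holomorphic

open Metric

variable {E G : Type*} [NormedAddCommGroup E] [NormedSpace ℂ E]
  [NormedAddCommGroup G] [NormedSpace ℂ G] {f : E → G} {c z : E} {R M : ℝ} {s U : Set E}

lemma norm_fderiv_le_of_forall_mem_ball_norm_le (hR : 0 < R)
    (hf : DifferentiableOn ℂ f (ball c R)) (hM : ∀ w ∈ ball c R, ‖f w‖ ≤ M) :
    ‖fderiv ℂ f c‖ ≤ 2 * M / R := by
  refine norm_fderiv_le_div_of_mapsTo_ball hf (fun w hw => ?_) hR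
  rw [mem_closedBall, dist_eq_norm]
  linarith [norm_sub_le (f w) (f c), hM w hw, hM c (mem_ball_self hR)]

/- The remainder is `o(‖w - c‖)` and bounded by `2 * M + 2 * M` on the ball, so the second-order
Schwarz lemma applies to it. -/
lemma norm_sub_sub_fderiv_le_of_forall_mem_ball_norm_le
    (hf : DifferentiableOn ℂ f (ball c R)) (hM : ∀ w ∈ ball c R, ‖f w‖ ≤ M) (hz : z ∈ ball c R) :
    ‖f z - f c - fderiv ℂ f c (z - c)‖ ≤ 4 * M * (‖z - c‖ / R) ^ 2 := by
  have hR : 0 < R := pos_of_mem_ball hz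
  have hc : HasFDerivAt f (fderiv ℂ f c) c :=
    (hf.differentiableAt (ball_mem_nhds c hR)).hasFDerivAt
  set g : E → G := fun w => f w - f c - fderiv ℂ f c (w - c) with hg
  have hgc : g c = 0 := by simp [hg]
  have hg_bound : Set.MapsTo g (ball c R) (closedBall (g c) (4 * M)) := by
    intro w hw
    have hlin : ‖fderiv ℂ f c (w - c)‖ ≤ 2 * M := calc
      ‖fderiv ℂ f c (w - c)‖ ≤ 2 * M / R * R :=
        (fderiv ℂ f c).le_of_opNorm_le_of_le (norm_fderiv_le_of_forall_mem_ball_norm_le hR hf hM)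
          (mem_ball_iff_norm.1 hw).le
      _ = 2 * M := div_mul_cancel₀ _ hR.ne'
    rw [hgc, mem_closedBall_zero_iff]
    linarith [norm_sub_le (f w - f c) (fderiv ℂ f c (w - c)), norm_sub_le (f w) (f c), hM w hw,
      hM c (mem_ball_self hR)]
  have hg_diff : DifferentiableOn ℂ g (ball c R) := by fun_prop
  have hg_isLittleO : (fun w => g w - g c) =o[𝓝 c] fun w => ‖w - c‖ ^ 1 := by
    simpa only [hgc, sub_zero, pow_one] using hc.isLittleO.norm_right
  simpa only [hgc, dist_eq_norm, sub_zero, one_add_one_eq_two] using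
    dist_le_mul_div_pow_of_mapsTo_ball_of_isLittleO hg_diff hg_bound hg_isLittleO hz

lemma tendstoUniformlyOn_slope_fderiv (hR : 0 < R) (hf : DifferentiableOn ℂ f (thickening R s))
    (hM : ∀ w ∈ thickening R s, ‖f w‖ ≤ M) (v : E) :
    TendstoUniformlyOn (fun (t : ℂ) z => t⁻¹ • (f (z + t • v) - f z)) (fun z => fderiv ℂ f z v)
      (𝓝[≠] 0) s := by
  have herror : Tendsto (fun t : ℂ => 4 * M * (‖v‖ / R) ^ 2 * ‖t‖) (𝓝 0) (𝓝 0) := by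
    simpa using (tendsto_norm_zero (E := ℂ)).const_mul (4 * M * (‖v‖ / R) ^ 2)
  rw [Metric.tendstoUniformlyOn_iff]
  intro ε hε
  filter_upwards [self_mem_nhdsWithin,
    (eventually_norm_smul_lt hR v).filter_mono nhdsWithin_le_nhds,
    (herror.eventually_lt_const hε).filter_mono nhdsWithin_le_nhds] with t ht htR htε z hz
  replace ht : t ≠ 0 := ht
  have hball := ball_subset_thickening hz R
  have htaylor := norm_sub_sub_fderiv_le_of_forall_mem_ball_norm_le (hf.mono hball)
    (fun w hw => hM w (hball hw)) (z := z + t • v) (by simpa using htR)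
  rw [add_sub_cancel_left, map_smul] at htaylor
  calc dist (fderiv ℂ f z v) (t⁻¹ • (f (z + t • v) - f z))
      = ‖t‖⁻¹ * ‖f (z + t • v) - f z - t • fderiv ℂ f z v‖ := by
        rw [dist_comm, dist_eq_norm, ← norm_inv, ← norm_smul, smul_sub t⁻¹ (_ - _),
          inv_smul_smul₀ ht]
    _ ≤ ‖t‖⁻¹ * (4 * M * (‖t • v‖ / R) ^ 2) := by gcongr
    _ = 4 * M * (‖v‖ / R) ^ 2 * ‖t‖ := by
        rw [norm_smul]
        field_simp [norm_ne_zero_iff.2 ht]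
    _ < ε := htε

section UniformLimits

variable {ι : Type*} {l : Filter ι} {F : ι → E → G}

lemma uniformCauchySeqOn_fderiv (hR : 0 < R)
    (hF : ∀ᶠ n in l, DifferentiableOn ℂ (F n) (thickening R s))
    (h : UniformCauchySeqOn F l (thickening R s)) :
    UniformCauchySeqOn (fun n => fderiv ℂ (F n)) l s := by
  intro u hu
  obtain ⟨ε, hε, hεu⟩ := Metric.mem_uniformity_dist.1 hu
  filter_upwards [h _ (dist_mem_uniformity (show 0 < ε * R / 4 by positivity)),
    hF.prod_mk hF] with n hn hdiff z hz
  have hball := ball_subset_thickening hz R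
  have hdiffAt : ∀ m, DifferentiableOn ℂ (F m) (thickening R s) → DifferentiableAt ℂ (F m) z :=
    fun m hm => (hm.mono hball).differentiableAt (ball_mem_nhds z hR)
  refine hεu ?_
  rw [dist_eq_norm, ← fderiv_sub (hdiffAt _ hdiff.1) (hdiffAt _ hdiff.2)]
  calc ‖fderiv ℂ (F n.1 - F n.2) z‖ ≤ 2 * (ε * R / 4) / R :=
        norm_fderiv_le_of_forall_mem_ball_norm_le hR ((hdiff.1.sub hdiff.2).mono hball)
          fun w hw => by simpa only [Pi.sub_apply, ← dist_eq_norm] using (hn w (hball hw)).le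
    _ = ε / 2 := by field_simp; ring
    _ < ε := half_lt_self hε

variable [CompleteSpace G]

theorem differentiableOn_of_tendstoUniformlyOn [l.NeBot] (hU : IsOpen U)
    (hF : ∀ᶠ n in l, DifferentiableOn ℂ (F n) U) (h : TendstoUniformlyOn F f l U) :
    DifferentiableOn ℂ f U := by
  intro c hc
  obtain ⟨ε, hε, hεU⟩ := Metric.isOpen_iff.1 hU c hc
  have hthick : thickening (ε / 2) (ball c (ε / 2)) ⊆ U :=
    (thickening_ball c _ _).trans (by rwa [add_halves])
  have hcauchy : UniformCauchySeqOn (fun n => fderiv ℂ (F n)) l (ball c (ε / 2)) :=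
    uniformCauchySeqOn_fderiv (half_pos hε) (hF.mono fun n hn => hn.mono hthick)
      (h.uniformCauchySeqOn.mono hthick)
  choose! f' hf' using fun z (hz : z ∈ ball c (ε / 2)) =>
    cauchy_map_iff_exists_tendsto.1 (hcauchy.cauchy_map hz)
  have hball : ball c (ε / 2) ∈ 𝓝 c := ball_mem_nhds c (half_pos hε)
  have hderiv : HasFDerivAt f (f' c) c := by
    refine hasFDerivAt_of_tendstoUniformlyOnFilter
      ((hcauchy.tendstoUniformlyOn_of_tendsto hf').tendstoUniformlyOnFilter.mono_right
        (le_principal_iff.2 hball)) ?_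
      (eventually_of_mem (hU.mem_nhds hc) fun z hz => h.tendsto_at hz)
    filter_upwards [hF.prod_mk (hU.eventually_mem hc)] with p hp
    exact (hp.1.differentiableAt (hU.mem_nhds hp.2)).hasFDerivAt
  exact hderiv.differentiableAt.differentiableWithinAt

theorem differentiableOn_tsum_of_forall_norm_le {u : ι → ℝ} (hu : Summable u) (hU : IsOpen U)
    (hF : ∀ i, DifferentiableOn ℂ (F i) U) (hFu : ∀ i, ∀ w ∈ U, ‖F i w‖ ≤ u i) :
    DifferentiableOn ℂ (fun w => ∑' i, F i w) U :=
  differentiableOn_of_tendstoUniformlyOn hU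
    (Eventually.of_forall fun _ => DifferentiableOn.fun_sum fun i _ => hF i)
    (tendstoUniformlyOn_tsum hu hFu)

end UniformLimits

theorem differentiableOn_fderiv_apply [CompleteSpace G] (hU : IsOpen U)
    (hf : DifferentiableOn ℂ f U) (v : E) : DifferentiableOn ℂ (fun z => fderiv ℂ f z v) U := by
  intro c hc
  obtain ⟨ε, hε, M, hεU, hM⟩ := exists_ball_subset_forall_norm_le hU hf.continuousOn hc
  have hthick : thickening (ε / 2) (ball c (ε / 2)) ⊆ ball c ε :=
    (thickening_ball c _ _).trans_eq (by rw [add_halves])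
  have hf_thick := hf.mono (hthick.trans hεU)
  have hslope := tendstoUniformlyOn_slope_fderiv (half_pos hε) hf_thick
    (fun w hw => hM w (hthick hw)) v
  have hslope_diff : ∀ᶠ t : ℂ in 𝓝[≠] 0,
      DifferentiableOn ℂ (fun z => t⁻¹ • (f (z + t • v) - f z)) (ball c (ε / 2)) := by
    filter_upwards [(eventually_norm_smul_lt (half_pos hε) v).filter_mono nhdsWithin_le_nhds]
      with t ht
    have hshift : Set.MapsTo (· + t • v) (ball c (ε / 2)) (thickening (ε / 2) (ball c (ε / 2))) :=
      fun z hz => ball_subset_thickening hz _ (by simpa using ht)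
    exact ((hf_thick.comp (by fun_prop) hshift).sub
      (hf_thick.mono (self_subset_thickening (half_pos hε) _))).const_smul t⁻¹
  exact ((differentiableOn_of_tendstoUniformlyOn isOpen_ball hslope_diff hslope).differentiableAt
    (ball_mem_nhds c (half_pos hε))).differentiableWithinAt

end Holomorphic

section MultiDeriv

open Metric

variable {n : ℕ} {D : Set (Fin n → ℂ)} {F : (Fin n → ℂ) → ℂ} {z w : Fin n → ℂ} {M : ℝ}

lemma pderivC_eq_fderiv_apply_single (i : Fin n) (hF : DifferentiableAt ℂ F z) :
    pderivC i F z = fderiv ℂ F z (Pi.single i 1) := by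
  have hF' : HasFDerivAt F (fderiv ℂ F z) (Function.update z i (z i)) := by
    simpa only [Function.update_eq_self] using hF.hasFDerivAt
  exact (hF'.comp_hasDerivAt (z i) (hasDerivAt_update z i (z i))).deriv

lemma differentiableOn_pderivC (hD : IsOpen D) (hF : DifferentiableOn ℂ F D) (i : Fin n) :
    DifferentiableOn ℂ (pderivC i F) D :=
  (differentiableOn_fderiv_apply hD hF (Pi.single i 1)).congr fun _ hz =>
    pderivC_eq_fderiv_apply_single i (hF.differentiableAt (hD.mem_nhds hz))

lemma differentiableOn_iterate_pderivC (hD : IsOpen D) (hF : DifferentiableOn ℂ F D) (i : Fin n)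
    (k : ℕ) : DifferentiableOn ℂ ((pderivC i)^[k] F) D :=
  Function.Iterate.rec (DifferentiableOn ℂ · D) hF (fun _ hG => differentiableOn_pderivC hD hG i) k

lemma iterate_pderivC_eq_iteratedDeriv (i : Fin n) (k : ℕ) (F : (Fin n → ℂ) → ℂ)
    (z : Fin n → ℂ) :
    (pderivC i)^[k] F z = iteratedDeriv k (fun t => F (Function.update z i t)) (z i) := by
  induction k generalizing z with
  | zero => simp
  | succ k ih => simp [Function.iterate_succ_apply', iteratedDeriv_succ, pderivC, ih]

/-- The iterated partial derivative of `F` of order `α i` in each coordinate `i` listed in `l`; it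
interpolates between `F` (empty list) and `multiDeriv α F` (all coordinates), so that statements
about `multiDeriv` can be proved one coordinate at a time. -/
def multiDerivAlong (l : List (Fin n)) (α : Fin n → ℕ) (F : (Fin n → ℂ) → ℂ) :
    (Fin n → ℂ) → ℂ :=
  l.foldr (fun i g => (pderivC i)^[α i] g) F

lemma differentiableOn_multiDerivAlong (hD : IsOpen D) (hF : DifferentiableOn ℂ F D)
    (l : List (Fin n)) (α : Fin n → ℕ) : DifferentiableOn ℂ (multiDerivAlong l α F) D := by
  induction l with
  | nil => exact hF
  | cons i l ih => exact differentiableOn_iterate_pderivC hD ih i (α i)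

lemma differentiableOn_multiDeriv (hD : IsOpen D) (hF : DifferentiableOn ℂ F D)
    (α : Fin n → ℕ) : DifferentiableOn ℂ (multiDeriv α F) D :=
  differentiableOn_multiDerivAlong hD hF (List.finRange n) α

lemma norm_iterate_pderivC_le_of_forall_update_norm_le (hF : DifferentiableOn ℂ F D)
    (i : Fin n) (k : ℕ) {r : ℝ} (hr : 0 < r)
    (hzD : ∀ t ∈ closedBall (z i) r, Function.update z i t ∈ D)
    (hM : ∀ t ∈ sphere (z i) r, ‖F (Function.update z i t)‖ ≤ M) :
    ‖(pderivC i)^[k] F z‖ ≤ k.factorial * M / r ^ k := by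
  rw [iterate_pderivC_eq_iteratedDeriv]
  have hslice : DifferentiableOn ℂ (fun t => F (Function.update z i t)) (closedBall (z i) r) :=
    hF.comp (fun t _ => (hasDerivAt_update z i t).differentiableAt.differentiableWithinAt) hzD
  exact norm_iteratedDeriv_le_of_forall_mem_sphere_norm_le k hr
    (hslice.mono closure_ball_subset_closedBall).diffContOnCl hM

lemma norm_multiDerivAlong_le_of_forall_mem_polydisc_norm_le (hD : IsOpen D)
    (hF : DifferentiableOn ℂ F D) {r : Fin n → ℝ} (hr : ∀ i, 0 < r i)
    (hzD : Set.univ.pi (fun i => closedBall (z i) (r i)) ⊆ D)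
    (hM : ∀ w ∈ Set.univ.pi (fun i => closedBall (z i) (r i)), ‖F w‖ ≤ M)
    (α : Fin n → ℕ) {l : List (Fin n)} (hl : l.Nodup)
    (hw : w ∈ Set.univ.pi (fun i => closedBall (z i) (r i))) (hwl : ∀ i ∈ l, w i = z i) :
    ‖multiDerivAlong l α F w‖ ≤ (l.map fun i => ((α i).factorial / r i ^ α i : ℝ)).prod * M := by
  induction l generalizing w with
  | nil => simpa [multiDerivAlong] using hM w hw
  | cons i l ih =>
    obtain ⟨hil, hl⟩ := List.nodup_cons.1 hl
    have hupdate : ∀ t ∈ closedBall (w i) (r i),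
        Function.update w i t ∈ Set.univ.pi (fun i => closedBall (z i) (r i)) := fun t ht =>
      (Set.update_mem_pi_iff_of_mem hw).2 fun _ => hwl i List.mem_cons_self ▸ ht
    have hupdate_eq : ∀ t, ∀ j ∈ l, Function.update w i t j = z j := fun t j hj => by
      rw [Function.update_of_ne (ne_of_mem_of_not_mem hj hil), hwl j (List.mem_cons_of_mem i hj)]
    refine (norm_iterate_pderivC_le_of_forall_update_norm_le
      (differentiableOn_multiDerivAlong hD hF l α) i (α i) (hr i)
      (fun t ht => hzD (hupdate t ht))
      fun t ht => ih hl (hupdate t (sphere_subset_closedBall ht)) (hupdate_eq t)).trans_eq ?_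
    rw [List.map_cons, List.prod_cons]
    ring

theorem norm_multiDeriv_le_of_forall_mem_polydisc_norm_le (hD : IsOpen D)
    (hF : DifferentiableOn ℂ F D) {r : Fin n → ℝ} (hr : ∀ i, 0 < r i)
    (hzD : Set.univ.pi (fun i => closedBall (z i) (r i)) ⊆ D)
    (hM : ∀ w ∈ Set.univ.pi (fun i => closedBall (z i) (r i)), ‖F w‖ ≤ M) (α : Fin n → ℕ) :
    ‖multiDeriv α F z‖ ≤ mfact α * M / ∏ i, r i ^ α i := by
  have hz : z ∈ Set.univ.pi (fun i => closedBall (z i) (r i)) := fun i _ =>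
    mem_closedBall_self (hr i).le
  calc ‖multiDeriv α F z‖
      ≤ ((List.finRange n).map fun i => ((α i).factorial / r i ^ α i : ℝ)).prod * M :=
        norm_multiDerivAlong_le_of_forall_mem_polydisc_norm_le hD hF hr hzD hM α
          (List.nodup_finRange n) hz fun _ _ => rfl
    _ = (∏ i, ((α i).factorial / r i ^ α i : ℝ)) * M := by
        rw [← List.ofFn_eq_map, List.prod_ofFn]
    _ = mfact α * M / ∏ i, r i ^ α i := by
        rw [Finset.prod_div_distrib, mfact, Nat.cast_prod]
        ring

theorem norm_multiDeriv_le_of_forall_mem_closedBall_norm_le (hD : IsOpen D)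
    (hF : DifferentiableOn ℂ F D) {r : ℝ} (hr : 0 < r) (hzD : closedBall z r ⊆ D)
    (hM : ∀ w ∈ closedBall z r, ‖F w‖ ≤ M) (α : Fin n → ℕ) :
    ‖multiDeriv α F z‖ ≤ mfact α * M / r ^ mdeg α := by
  rw [closedBall_pi z hr.le] at hzD hM
  simpa only [Finset.prod_pow_eq_pow_sum, mdeg] using
    norm_multiDeriv_le_of_forall_mem_polydisc_norm_le hD hF (fun _ => hr) hzD hM α

lemma mfact_pos (α : Fin n → ℕ) : 0 < mfact α :=
  Finset.prod_pos fun i _ => (α i).factorial_pos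

lemma norm_mul_multiDeriv_div_mfact_le (hD : IsOpen D) (hF : DifferentiableOn ℂ F D) {r : ℝ}
    (hr : 0 < r) (hzD : closedBall z r ⊆ D) (hM : ∀ w ∈ closedBall z r, ‖F w‖ ≤ M)
    (a : ℂ) (α : Fin n → ℕ) :
    ‖a * multiDeriv α F z / (mfact α : ℂ)‖ ≤ M * (‖a‖ * r⁻¹ ^ mdeg α) := by
  have hfact : (0 : ℝ) < mfact α := mod_cast mfact_pos α
  rw [norm_div, norm_mul, norm_natCast, div_le_iff₀ hfact]
  calc ‖a‖ * ‖multiDeriv α F z‖ ≤ ‖a‖ * (mfact α * M / r ^ mdeg α) := by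
        gcongr
        exact norm_multiDeriv_le_of_forall_mem_closedBall_norm_le hD hF hr hzD hM α
    _ = M * (‖a‖ * r⁻¹ ^ mdeg α) * mfact α := by
        rw [inv_pow]
        ring

theorem exists_ball_summable_bound_xiAct_terms (hD : IsOpen D) {ξ : (Fin n → ℕ) → ℂ}
    (hξ : MemL1 ξ) (hF : DifferentiableOn ℂ F D) (hz : z ∈ D) :
    ∃ r > 0, ball z r ⊆ D ∧ ∃ u : (Fin n → ℕ) → ℝ, Summable u ∧
      ∀ α, ∀ w ∈ ball z r, ‖ξ α * multiDeriv α F w / (mfact α : ℂ)‖ ≤ u α := by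
  obtain ⟨ε, hε, M, hεD, hM⟩ := exists_ball_subset_forall_norm_le hD hF.continuousOn hz
  have hsub : ∀ w ∈ ball z (ε / 2), closedBall w (ε / 2) ⊆ ball z ε := fun w hw =>
    closedBall_subset_ball' (by linarith [mem_ball.1 hw])
  exact ⟨ε / 2, half_pos hε, (ball_subset_ball (half_le_self hε.le)).trans hεD, _,
    (hξ (ε / 2)⁻¹ (by positivity)).mul_left M, fun α w hw =>
      norm_mul_multiDeriv_div_mfact_le hD hF (half_pos hε) ((hsub w hw).trans hεD)
        (fun x hx => hM x (hsub w hw hx)) (ξ α) α⟩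

end MultiDeriv

theorem statement0_general {n : ℕ} {D : Set (Fin n → ℂ)} (hD : IsOpen D)
    {ξ : (Fin n → ℕ) → ℂ} (hξ : MemL1 ξ) {F : (Fin n → ℂ) → ℂ} (hF : DifferentiableOn ℂ F D) :
    (∀ z ∈ D, Summable fun α : Fin n → ℕ => ‖ξ α * multiDeriv α F z / (mfact α : ℂ)‖) ∧
    DifferentiableOn ℂ (xiAct ξ F) D := by
  refine ⟨fun z hz => ?_, fun z hz => ?_⟩ <;>
    obtain ⟨r, hr, hrD, u, hu, hbound⟩ := exists_ball_summable_bound_xiAct_terms hD hξ hF hz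
  · exact hu.of_nonneg_of_le (fun _ => norm_nonneg _)
      fun α => hbound α z (Metric.mem_ball_self hr)
  · have hterm : ∀ α, DifferentiableOn ℂ
        (fun w => ξ α * multiDeriv α F w / (mfact α : ℂ)) (Metric.ball z r) := fun α => by
      simpa only [div_eq_mul_inv] using
        (((differentiableOn_multiDeriv hD hF α).const_mul (ξ α)).mul_const _).mono hrD
    exact ((differentiableOn_tsum_of_forall_norm_le hu Metric.isOpen_ball hterm
      hbound).differentiableAt (Metric.ball_mem_nhds z hr)).differentiableWithinAt

/-- For `ξ ∈ ℓ₁^{(n)}` and `F` holomorphic on a domain `D ⊆ ℂⁿ`, the series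
`(ξ·F)(z) = ∑_α ξ_α F^{(α)}(z)/α!` converges absolutely at every point of `D`,
and the resulting function is holomorphic on `D`. -/
theorem statement0 {n : ℕ} (D : Set (Fin n → ℂ)) (hDo : IsOpen D) (hDc : IsConnected D)
    (ξ : (Fin n → ℕ) → ℂ) (hξ : MemL1 ξ)
    (F : (Fin n → ℂ) → ℂ) (hF : DifferentiableOn ℂ F D) :
    (∀ z ∈ D, Summable fun α : Fin n → ℕ => ‖ξ α * multiDeriv α F z / (mfact α : ℂ)‖) ∧
    DifferentiableOn ℂ (xiAct ξ F) D := by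
  exact statement0_general hDo hξ hF
end
end

section
/- Let ξ(·) be a functional-valued function on a domain D ⊆ ℂᵐ with ξ(w) ∈ ℓ₁^{(n)} for all w ∈ D. Suppose that for every bounded domain Ω' ⊆ ℂⁿ, every z₀ ∈ Ω', and every F ∈ A²(Ω'), the function w ↦ (ξ(w)·F)(z₀) is holomorphic on D. Then each coefficient w ↦ ξ_α(w) is holomorphic on D, and ξ(·) satisfies the locally uniformly bounded property: for each w₀ ∈ D and ρ > 0 there is a neighborhood V of w₀ with sup_{w∈V} ∑_α |ξ_α(w)| ρ^{|α|} < ∞. -/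
open MeasureTheory Filter Topology Complex
open scoped ENNReal
noncomputable section

/-!
It suffices to test `ξ` on bounded holomorphic functions on polydiscs centred at the origin. For
bounded `c` and `ρ > 0` the series `F(z) = ∑ c_α ρ^{|α|} z^α` converges on the polydisc of radius
`1/ρ` and has Taylor coefficients `c_α ρ^{|α|}`, so `(ξ(w)·F)(0) = ∑ ξ_α(w) ρ^{|α|} c_α` is the
pairing of `(ξ_α(w) ρ^{|α|})_α ∈ ℓ¹` with `c ∈ ℓ^∞`. Taking for `c` an indicator gives the
holomorphy of each coefficient. In general the pairing is continuous in `w`, hence bounded near `w₀`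
for each fixed `c`, and the uniform boundedness principle on `ℓ^∞` bounds the `ℓ¹` norms near `w₀`.
-/

section UniformBoundedness

variable {κ : Type*} {l : Filter κ} [l.IsCountablyGenerated]

theorem isBoundedUnder_norm_of_forall_apply {𝕜 𝕜₂ E F : Type*} [NontriviallyNormedField 𝕜]
    [NontriviallyNormedField 𝕜₂] [SeminormedAddCommGroup E] [SeminormedAddCommGroup F]
    [NormedSpace 𝕜 E] [NormedSpace 𝕜₂ F] {σ : 𝕜 →+* 𝕜₂} [RingHomIsometric σ] [CompleteSpace E]
    {g : κ → E →SL[σ] F} (h : ∀ x, l.IsBoundedUnder (· ≤ ·) fun k => ‖g k x‖) :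
    l.IsBoundedUnder (· ≤ ·) fun k => ‖g k‖ := by
  by_contra hunbdd
  have hfreq (C : ℝ) : ∃ᶠ k in l, C < ‖g k‖ := fun hC =>
    hunbdd ⟨C, eventually_map.2 (hC.mono fun _ => not_lt.1)⟩
  obtain ⟨b, hb⟩ := l.exists_antitone_basis
  choose k hk hkb using fun N : ℕ => ((hfreq N).and_eventually (hb.mem N)).exists
  obtain ⟨C, hC⟩ := banach_steinhaus (g := fun N => g (k N)) fun x => by
    obtain ⟨C, hC⟩ := IsBoundedUnder.bddAbove_range ((hb.tendsto hkb).isBoundedUnder_comp (h x))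
    exact ⟨C, fun N => hC ⟨N, rfl⟩⟩
  obtain ⟨N, hN⟩ := exists_nat_gt C
  exact ((hk N).trans_le (hC N)).not_gt hN

variable {ι 𝕜 : Type*} [RCLike 𝕜]

/-- The functional `c ↦ ∑ i, a i * c i` on `ℓ^∞` represented by `a ∈ ℓ¹`, through which the uniform
boundedness principle applies to families in `ℓ¹`. -/
def ellOneFunctional (a : lp (fun _ : ι => 𝕜) 1) : StrongDual 𝕜 (lp (fun _ : ι => 𝕜) ∞) :=
  lp.dualPairing 1 ∞ (fun _ => ContinuousLinearMap.mul 𝕜 𝕜) (K := 1)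
    (fun _ => ContinuousLinearMap.opNorm_mul_le 𝕜 𝕜) a

theorem ellOneFunctional_apply (a : lp (fun _ : ι => 𝕜) 1) (c : lp (fun _ : ι => 𝕜) ∞) :
    ellOneFunctional a c = ∑' i, a i * c i :=
  rfl

theorem norm_lp_one_eq_tsum {E : ι → Type*} [∀ i, NormedAddCommGroup (E i)] (a : lp E 1) :
    ‖a‖ = ∑' i, ‖a i‖ := by
  simpa using lp.norm_eq_tsum_rpow (p := 1) (by simp) a

theorem norm_le_norm_ellOneFunctional (a : lp (fun _ : ι => 𝕜) 1) :
    ‖a‖ ≤ ‖ellOneFunctional a‖ := by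
  have hphase (i : ι) : ‖(starRingEnd 𝕜) (a i) / (‖a i‖ : 𝕜)‖ ≤ 1 := by
    rw [norm_div, RCLike.norm_conj, RCLike.norm_ofReal, abs_norm]
    exact div_self_le_one _
  let c : lp (fun _ : ι => 𝕜) ∞ :=
    ⟨fun i => (starRingEnd 𝕜) (a i) / ‖a i‖, memℓp_infty ⟨1, Set.forall_mem_range.2 hphase⟩⟩
  have hpair : ellOneFunctional a c = ((‖a‖ : ℝ) : 𝕜) := by
    rw [ellOneFunctional_apply, norm_lp_one_eq_tsum, RCLike.ofReal_tsum]
    refine tsum_congr fun i => ?_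
    change a i * ((starRingEnd 𝕜) (a i) / ‖a i‖) = ‖a i‖
    rw [← mul_div_assoc, RCLike.mul_conj, sq, mul_self_div_self]
  calc ‖a‖ = ‖ellOneFunctional a c‖ := by rw [hpair, RCLike.norm_ofReal, abs_norm]
    _ ≤ ‖ellOneFunctional a‖ :=
      (ellOneFunctional a).unit_le_opNorm c (lp.norm_le_of_forall_le zero_le_one hphase)

theorem isBoundedUnder_norm_lp_one {a : κ → lp (fun _ : ι => 𝕜) 1}
    (h : ∀ c : lp (fun _ : ι => 𝕜) ∞, l.IsBoundedUnder (· ≤ ·) fun k => ‖∑' i, a k i * c i‖) :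
    l.IsBoundedUnder (· ≤ ·) fun k => ‖a k‖ :=
  (isBoundedUnder_norm_of_forall_apply (g := fun k => ellOneFunctional (a k)) h).mono_le
    (.of_forall fun k => norm_le_norm_ellOneFunctional (a k))

theorem exists_nhds_tsum_norm_le_of_continuousOn {X : Type*} [TopologicalSpace X]
    [FirstCountableTopology X] {D : Set X} {a : X → ι → 𝕜} (ha : ∀ x ∈ D, Summable fun i => ‖a x i‖)
    (hcont : ∀ (c : ι → 𝕜) (C : ℝ), (∀ i, ‖c i‖ ≤ C) →
      ContinuousOn (fun x => ∑' i, a x i * c i) D) {x₀ : X} (hx₀ : x₀ ∈ D) :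
    ∃ V ∈ 𝓝 x₀, ∃ C, ∀ x ∈ V ∩ D, ∑' i, ‖a x i‖ ≤ C := by
  let b (x : D) : lp (fun _ : ι => 𝕜) 1 := ⟨a x, memℓp_gen (by simpa using ha x x.2)⟩
  have hbdd : (𝓝 (⟨x₀, hx₀⟩ : D)).IsBoundedUnder (· ≤ ·) fun x => ‖b x‖ :=
    isBoundedUnder_norm_lp_one fun c =>
      ((hcont c ‖c‖ (lp.norm_apply_le_norm ENNReal.top_ne_zero c)).domRestrict.tendsto
        ⟨x₀, hx₀⟩).norm.isBoundedUnder_le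
  obtain ⟨C, hC⟩ := hbdd
  obtain ⟨V, hV, hVC⟩ := (mem_nhds_subtype D ⟨x₀, hx₀⟩ _).1 (eventually_map.1 hC)
  exact ⟨V, hV, C, fun x hx => (norm_lp_one_eq_tsum (b ⟨x, hx.2⟩)).ge.trans (hVC hx.1)⟩

end UniformBoundedness

theorem differentiableOn_apply_of_tsum_mul {ι 𝕜 E : Type*} [NontriviallyNormedField 𝕜]
    [NormedAddCommGroup E] [NormedSpace 𝕜 E] {D : Set E} {a : E → ι → 𝕜}
    (h : ∀ (c : ι → 𝕜) (C : ℝ), (∀ i, ‖c i‖ ≤ C) →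
      DifferentiableOn 𝕜 (fun x => ∑' i, a x i * c i) D) (i : ι) :
    DifferentiableOn 𝕜 (fun x => a x i) D := by
  classical
  have hsingle (j : ι) : ‖(Pi.single i 1 : ι → 𝕜) j‖ ≤ 1 := by
    obtain rfl | hj := eq_or_ne j i
    · simp
    · simp [Pi.single_eq_of_ne hj]
  refine (h _ 1 hsingle).congr fun x _ => ?_
  rw [tsum_eq_single i fun j hj => by rw [Pi.single_eq_of_ne hj, mul_zero], Pi.single_eq_same,
    mul_one]

section NormallyConvergentSeries

variable {κ : Type*} {u : κ → ℝ}

theorem differentiableOn_of_hasSum_of_norm_le {E G : Type*} [NormedAddCommGroup E]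
    [NormedSpace ℂ E] [NormedAddCommGroup G] [NormedSpace ℂ G] [CompleteSpace G] {U : Set E}
    {f : κ → E → G} {g : E → G} (hu : Summable u) (hU : IsOpen U)
    (hf : ∀ k, DifferentiableOn ℂ (f k) U) (hfu : ∀ k, ∀ x ∈ U, ‖f k x‖ ≤ u k)
    (hg : ∀ x ∈ U, HasSum (f · x) (g x)) : DifferentiableOn ℂ g U := by
  intro x hx
  obtain ⟨R, hR, hball⟩ := Metric.isOpen_iff.1 hU x hx
  have hsub {y : E} (hy : y ∈ Metric.ball x (R / 2)) : Metric.ball y (R / 2) ⊆ U := by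
    refine (Metric.ball_subset_ball' ?_).trans hball
    linarith [Metric.mem_ball.1 hy]
  have hmem {y : E} (hy : y ∈ Metric.ball x (R / 2)) : y ∈ U :=
    hsub hy (Metric.mem_ball_self (half_pos hR))
  have hcauchy (k : κ) (y : E) (hy : y ∈ Metric.ball x (R / 2)) :
      ‖fderiv ℂ (f k) y‖ ≤ (u k + u k) / (R / 2) := by
    refine norm_fderiv_le_div_of_mapsTo_ball ((hf k).mono (hsub hy)) (fun v hv => ?_) (half_pos hR)
    rw [mem_closedBall_iff_norm]
    exact norm_sub_le_of_le (hfu k v (hsub hy hv)) (hfu k y (hmem hy))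
  have hx' : x ∈ Metric.ball x (R / 2) := Metric.mem_ball_self (half_pos hR)
  have hderiv := hasFDerivAt_tsum_of_isPreconnected ((hu.add hu).div_const (R / 2))
    Metric.isOpen_ball Metric.isPreconnected_ball
    (fun k y hy => ((hf k).differentiableAt (hU.mem_nhds (hmem hy))).hasFDerivAt) hcauchy hx'
    (hg x hx).summable hx'
  refine (hderiv.differentiableAt.congr_of_eventuallyEq ?_).differentiableWithinAt
  filter_upwards [hU.mem_nhds hx] with y hy using (hg y hy).tsum_eq.symm

theorem hasSum_pderivC {n : ℕ} {U : Set (Fin n → ℂ)} {f : κ → (Fin n → ℂ) → ℂ}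
    {g : (Fin n → ℂ) → ℂ} (hu : Summable u) (hU : IsOpen U)
    (hf : ∀ k, DifferentiableOn ℂ (f k) U) (hfu : ∀ k, ∀ x ∈ U, ‖f k x‖ ≤ u k)
    (hg : ∀ x ∈ U, HasSum (f · x) (g x)) (i : Fin n) {z : Fin n → ℂ} (hz : z ∈ U) :
    HasSum (fun k => pderivC i (f k) z) (pderivC i g z) := by
  have hline : Differentiable ℂ (Function.update z i) := fun t =>
    (hasFDerivAt_update z t).differentiableAt
  have hopen : IsOpen (Function.update z i ⁻¹' U) := hU.preimage hline.continuous
  have hzi : z i ∈ Function.update z i ⁻¹' U := by simpa using hz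
  have hderiv := hasSum_deriv_of_summable_norm (F := fun k t => f k (Function.update z i t)) hu
    (fun k => (hf k).comp hline.differentiableOn (Set.mapsTo_preimage _ _)) hopen
    (fun k _ ht => hfu k _ ht) hzi
  have hg_line : (fun t => ∑' k, f k (Function.update z i t)) =ᶠ[𝓝 (z i)]
      fun t => g (Function.update z i t) := by
    filter_upwards [hopen.mem_nhds hzi] with t ht using (hg _ ht).tsum_eq
  rwa [hg_line.deriv_eq] at hderiv

theorem pderivC_const_mul {n : ℕ} (i : Fin n) (b : ℂ) (f : (Fin n → ℂ) → ℂ) (z : Fin n → ℂ) :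
    pderivC i (fun x => b * f x) z = b * pderivC i f z :=
  deriv_const_mul_field b

end NormallyConvergentSeries

section DividedMonomial

variable {n : ℕ}

/-- The divided monomial `z^α / α!`. Dividing by `α!` turns partial derivatives into index
shifts. -/
def dividedMonomial (α : Fin n → ℕ) (z : Fin n → ℂ) : ℂ := ∏ i, z i ^ α i / (α i).factorial

theorem differentiable_dividedMonomial (α : Fin n → ℕ) :
    Differentiable ℂ (dividedMonomial α) := by
  unfold dividedMonomial
  fun_prop

theorem dividedMonomial_const (α : Fin n → ℕ) (s : ℂ) :
    dividedMonomial α (fun _ => s) = s ^ mdeg α / mfact α := by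
  simp only [dividedMonomial, mdeg, mfact, Finset.prod_div_distrib, Finset.prod_pow_eq_pow_sum,
    Nat.cast_prod]

theorem dividedMonomial_apply_zero_of_ne_zero {α : Fin n → ℕ} (hα : α ≠ 0) :
    dividedMonomial α 0 = 0 := by
  obtain ⟨i, hi⟩ := Function.ne_iff.1 hα
  exact Finset.prod_eq_zero (Finset.mem_univ i) (by simp [show α i ≠ 0 from hi])

theorem norm_dividedMonomial_le (α : Fin n → ℕ) {z : Fin n → ℂ} {s : ℝ} (hz : ‖z‖ ≤ s) :
    ‖dividedMonomial α z‖ ≤ s ^ mdeg α / mfact α := by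
  calc ‖dividedMonomial α z‖ = ∏ i, ‖z i‖ ^ α i / (α i).factorial := by
        simp [dividedMonomial, norm_prod]
    _ ≤ ∏ i, s ^ α i / (α i).factorial := by
        gcongr with i
        exact (norm_le_pi_norm z i).trans hz
    _ = s ^ mdeg α / mfact α := by
        simp only [mdeg, mfact, Finset.prod_div_distrib, Finset.prod_pow_eq_pow_sum, Nat.cast_prod]

theorem norm_mul_dividedMonomial_le (b : ℂ) (α : Fin n → ℕ) {z : Fin n → ℂ} {s : ℝ}
    (hz : z ∈ Metric.ball (0 : Fin n → ℂ) s) :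
    ‖b * dividedMonomial α z‖ ≤ ‖b‖ * (s ^ mdeg α / mfact α) := by
  rw [norm_mul]
  gcongr
  exact norm_dividedMonomial_le α (mem_ball_zero_iff.1 hz).le

theorem dividedMonomial_update (α : Fin n → ℕ) (z : Fin n → ℂ) (i : Fin n) (t : ℂ) :
    dividedMonomial α (Function.update z i t) =
      t ^ α i / (α i).factorial * ∏ j ∈ Finset.univ.erase i, z j ^ α j / (α j).factorial := by
  rw [dividedMonomial, ← Finset.mul_prod_erase _ _ (Finset.mem_univ i), Function.update_self]
  congr 1
  refine Finset.prod_congr rfl fun j hj => ?_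
  rw [Function.update_of_ne (Finset.ne_of_mem_erase hj)]

theorem pderivC_dividedMonomial_of_eq_zero {α : Fin n → ℕ} {i : Fin n} (hα : α i = 0)
    (z : Fin n → ℂ) : pderivC i (dividedMonomial α) z = 0 := by
  simp [pderivC, dividedMonomial_update, hα]

theorem deriv_pow_succ_div_factorial {𝕜 : Type*} [NontriviallyNormedField 𝕜] [CharZero 𝕜] (k : ℕ)
    (t : 𝕜) : deriv (fun x : 𝕜 => x ^ (k + 1) / (k + 1).factorial) t = t ^ k / k.factorial := by
  rw [deriv_div_const, deriv_pow_field, Nat.add_sub_cancel, Nat.factorial_succ, Nat.cast_mul]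
  exact mul_div_mul_left _ _ (Nat.cast_ne_zero.2 k.succ_ne_zero)

theorem pderivC_dividedMonomial_add_single (α : Fin n → ℕ) (i : Fin n) (z : Fin n → ℂ) :
    pderivC i (dividedMonomial (α + Pi.single i 1)) z = dividedMonomial α z := by
  have hoff : ∏ j ∈ Finset.univ.erase i, z j ^ (α + Pi.single i 1 : Fin n → ℕ) j /
      ((α + Pi.single i 1 : Fin n → ℕ) j).factorial =
        ∏ j ∈ Finset.univ.erase i, z j ^ α j / (α j).factorial := by
    refine Finset.prod_congr rfl fun j hj => ?_
    simp [Pi.single_eq_of_ne (Finset.ne_of_mem_erase hj)]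
  simp only [pderivC, dividedMonomial_update, hoff]
  simp only [Pi.add_apply, Pi.single_eq_same, deriv_mul_const_field, deriv_pow_succ_div_factorial]
  exact Finset.mul_prod_erase _ (fun j => z j ^ α j / (α j).factorial) (Finset.mem_univ i)

theorem mfact_ne_zero (α : Fin n → ℕ) : mfact α ≠ 0 :=
  Finset.prod_ne_zero_iff.2 fun i _ => (α i).factorial_ne_zero

theorem summable_pow_mdeg {t : ℝ} (h0 : 0 ≤ t) (h1 : t < 1) :
    Summable fun α : Fin n → ℕ => t ^ mdeg α := by
  refine summable_of_sum_le (c := ∏ _i : Fin n, ∑' k : ℕ, t ^ k) (fun α => by positivity)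
    fun u => ?_
  have hbox : u ⊆ Fintype.piFinset fun i => u.image (· i) := fun α hα =>
    Fintype.mem_piFinset.2 fun i => Finset.mem_image_of_mem _ hα
  calc ∑ α ∈ u, t ^ mdeg α
      ≤ ∑ α ∈ Fintype.piFinset fun i => u.image (· i), t ^ mdeg α :=
        Finset.sum_le_sum_of_subset_of_nonneg hbox fun _ _ _ => by positivity
    _ = ∏ i, ∑ k ∈ u.image (· i), t ^ k := by
        simp only [mdeg, ← Finset.prod_pow_eq_pow_sum, Finset.prod_univ_sum]
    _ ≤ ∏ _i : Fin n, ∑' k : ℕ, t ^ k := by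
        gcongr
        exact (summable_geometric_of_lt_one h0 h1).sum_le_tsum _ fun _ _ => by positivity

end DividedMonomial

/-- `f` is, on the polydisc of radius `r` around the origin, the sum of its Taylor series
`∑ B_α z^α / α!`. The data `B_α` are the derivatives `f^{(α)}(0)` rather than the power series
coefficients, so that differentiating `f` merely shifts `B`. -/
def HasTaylorOn {n : ℕ} (r : ℝ) (B : (Fin n → ℕ) → ℂ) (f : (Fin n → ℂ) → ℂ) : Prop :=
  ∀ z ∈ Metric.ball (0 : Fin n → ℂ) r, HasSum (fun α => B α * dividedMonomial α z) (f z)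

namespace HasTaylorOn

variable {n : ℕ} {r s : ℝ} {B : (Fin n → ℕ) → ℂ} {f : (Fin n → ℂ) → ℂ}

theorem summable_norm (h : HasTaylorOn r B f) (hs : 0 ≤ s) (hsr : s < r) :
    Summable fun α => ‖B α‖ * (s ^ mdeg α / mfact α) := by
  have hdiag : (fun _ => (s : ℂ)) ∈ Metric.ball (0 : Fin n → ℂ) r := by
    rw [mem_ball_zero_iff]
    refine (pi_norm_const_le _).trans_lt ?_
    rwa [Complex.norm_real, Real.norm_of_nonneg hs]
  refine (h _ hdiag).summable.norm.congr fun α => ?_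
  simp [dividedMonomial_const, abs_of_nonneg hs]

theorem exists_norm_le (h : HasTaylorOn r B f) (hs : 0 ≤ s) (hsr : s < r) :
    ∃ C, ∀ z ∈ Metric.ball (0 : Fin n → ℂ) s, ‖f z‖ ≤ C :=
  ⟨_, fun z hz => (h z (Metric.ball_subset_ball hsr.le hz)).norm_le_of_bounded
    (h.summable_norm hs hsr).hasSum fun α => norm_mul_dividedMonomial_le (B α) α hz⟩

theorem mono (h : HasTaylorOn r B f) (hsr : s ≤ r) : HasTaylorOn s B f := fun z hz =>
  h z (Metric.ball_subset_ball hsr hz)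

theorem differentiableOn (h : HasTaylorOn r B f) : DifferentiableOn ℂ f (Metric.ball 0 r) := by
  intro z hz
  obtain ⟨s, hzs, hsr⟩ := exists_between (mem_ball_zero_iff.1 hz)
  have hball : DifferentiableOn ℂ f (Metric.ball 0 s) :=
    differentiableOn_of_hasSum_of_norm_le (h.summable_norm ((norm_nonneg z).trans hzs.le) hsr)
      Metric.isOpen_ball
      (fun α => ((differentiable_dividedMonomial α).const_mul (B α)).differentiableOn)
      (fun α _ hx => norm_mul_dividedMonomial_le (B α) α hx) (h.mono hsr.le)
  exact (hball.differentiableAt (Metric.isOpen_ball.mem_nhds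
    (mem_ball_zero_iff.2 hzs))).differentiableWithinAt

protected theorem pderivC (h : HasTaylorOn r B f) (i : Fin n) :
    HasTaylorOn r (fun α => B (α + Pi.single i 1)) (pderivC i f) := by
  intro z hz
  obtain ⟨s, hzs, hsr⟩ := exists_between (mem_ball_zero_iff.1 hz)
  have hterms : HasSum (fun α => B α * pderivC i (dividedMonomial α) z) (pderivC i f z) := by
    simpa only [pderivC_const_mul] using
      hasSum_pderivC (h.summable_norm ((norm_nonneg z).trans hzs.le) hsr) Metric.isOpen_ball
        (fun α => ((differentiable_dividedMonomial α).const_mul (B α)).differentiableOn)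
        (fun α _ hx => norm_mul_dividedMonomial_le (B α) α hx) (h.mono hsr.le) i
        (mem_ball_zero_iff.2 hzs)
  have hvanish (α : Fin n → ℕ) (hα : α ∉ Set.range (· + (Pi.single i 1 : Fin n → ℕ))) :
      B α * pderivC i (dividedMonomial α) z = 0 := by
    have hαi : α i = 0 := by
      by_contra hne
      refine hα ⟨α - Pi.single i 1, tsub_add_cancel_of_le fun j => ?_⟩
      obtain rfl | hj := eq_or_ne j i
      · simpa using Nat.one_le_iff_ne_zero.2 hne
      · simp [Pi.single_eq_of_ne hj]
    rw [pderivC_dividedMonomial_of_eq_zero hαi, mul_zero]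
  refine (((add_left_injective (Pi.single i 1)).hasSum_iff hvanish).2 hterms).congr_fun fun α => ?_
  simp only [Function.comp_apply, pderivC_dividedMonomial_add_single]

theorem iterate_pderivC (h : HasTaylorOn r B f) (i : Fin n) (k : ℕ) :
    HasTaylorOn r (fun α => B (α + Pi.single i k)) ((pderivC i)^[k] f) := by
  induction k with
  | zero => simpa using h
  | succ k ih =>
    rw [Function.iterate_succ_apply']
    simpa only [add_assoc, ← Pi.single_add, add_comm 1 k] using ih.pderivC i

theorem foldr_pderivC (h : HasTaylorOn r B f) (α : Fin n → ℕ) (is : List (Fin n)) :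
    HasTaylorOn r (fun β => B (β + (is.map fun i => Pi.single i (α i)).sum))
      (is.foldr (fun i g => (pderivC i)^[α i] g) f) := by
  induction is with
  | nil => simpa using h
  | cons i is ih =>
    simpa only [List.foldr_cons, List.map_cons, List.sum_cons, add_assoc] using
      ih.iterate_pderivC i (α i)

theorem apply_zero (h : HasTaylorOn r B f) (hr : 0 < r) : f 0 = B 0 := by
  have hsingle := hasSum_single (f := fun α => B α * dividedMonomial α 0) 0 fun α hα => by
    rw [dividedMonomial_apply_zero_of_ne_zero hα, mul_zero]
  simpa [dividedMonomial] using (h 0 (Metric.mem_ball_self hr)).unique hsingle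

theorem multiDeriv_zero (h : HasTaylorOn r B f) (hr : 0 < r) (α : Fin n → ℕ) :
    multiDeriv α f 0 = B α := by
  refine ((h.foldr_pderivC α (List.finRange n)).apply_zero hr).trans ?_
  rw [← List.ofFn_eq_map, List.sum_ofFn, zero_add, Finset.univ_sum_single]

theorem xiAct_zero (h : HasTaylorOn r B f) (hr : 0 < r) (ξ : (Fin n → ℕ) → ℂ) :
    xiAct ξ f 0 = ∑' α, ξ α * (B α / mfact α) := by
  simp only [xiAct, h.multiDeriv_zero hr, mul_div_assoc]

end HasTaylorOn

theorem exists_hasTaylorOn {n : ℕ} {B : (Fin n → ℕ) → ℂ} {C ρ : ℝ} (hρ : 0 < ρ)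
    (hB : ∀ α, ‖B α‖ ≤ C * ρ ^ mdeg α * mfact α) : ∃ f, HasTaylorOn ρ⁻¹ B f := by
  refine ⟨fun z => ∑' α, B α * dividedMonomial α z, fun z hz => Summable.hasSum ?_⟩
  have hlt : ρ * ‖z‖ < 1 := by
    rw [← lt_inv_mul_iff₀ hρ, mul_one]
    exact mem_ball_zero_iff.1 hz
  refine .of_norm_bounded ((summable_pow_mdeg (by positivity) hlt).mul_left C) fun α => ?_
  have hfact : (mfact α : ℝ) ≠ 0 := Nat.cast_ne_zero.2 (mfact_ne_zero α)
  calc ‖B α * dividedMonomial α z‖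
      ≤ C * ρ ^ mdeg α * mfact α * (‖z‖ ^ mdeg α / mfact α) := by
        rw [norm_mul]
        exact mul_le_mul (hB α) (norm_dividedMonomial_le α le_rfl) (norm_nonneg _)
          ((norm_nonneg _).trans (hB α))
    _ = C * (ρ * ‖z‖) ^ mdeg α := by
        rw [mul_pow]
        field_simp

theorem exists_bounded_holomorphic_xiAct_eq {n : ℕ} {c : (Fin n → ℕ) → ℂ} {C ρ : ℝ}
    (hc : ∀ α, ‖c α‖ ≤ C) (hρ : 0 < ρ) :
    ∃ r > 0, ∃ F : (Fin n → ℂ) → ℂ, DifferentiableOn ℂ F (Metric.ball 0 r) ∧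
      (∃ M, ∀ z ∈ Metric.ball (0 : Fin n → ℂ) r, ‖F z‖ ≤ M) ∧
      ∀ ξ, xiAct ξ F 0 = ∑' α, ξ α * (ρ : ℂ) ^ mdeg α * c α := by
  obtain ⟨F, hF⟩ := exists_hasTaylorOn (B := fun α => (ρ : ℂ) ^ mdeg α * c α * mfact α) hρ
    fun α => by
      rw [mul_comm C]
      simp only [norm_mul, norm_pow, Complex.norm_real, Real.norm_of_nonneg hρ.le,
        Complex.norm_natCast]
      gcongr
      exact hc α
  have hr : 0 < ρ⁻¹ / 2 := by positivity
  have hr_lt : ρ⁻¹ / 2 < ρ⁻¹ := half_lt_self (by positivity)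
  refine ⟨ρ⁻¹ / 2, hr, F, hF.differentiableOn.mono (Metric.ball_subset_ball hr_lt.le),
    hF.exists_norm_le hr.le hr_lt,
    fun ξ => (hF.xiAct_zero (by positivity) ξ).trans (tsum_congr fun α => ?_)⟩
  rw [mul_div_cancel_right₀ _ (Nat.cast_ne_zero.2 (mfact_ne_zero α)), mul_assoc]

theorem setLIntegral_norm_sq_lt_top {X E : Type*} [MeasurableSpace X] [SeminormedAddCommGroup E]
    {μ : Measure X} {s : Set X} {f : X → E} (hs : μ s < ⊤) (hf : ∃ M, ∀ x ∈ s, ‖f x‖ ≤ M) :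
    ∫⁻ x in s, ENNReal.ofReal (‖f x‖ ^ 2) ∂μ < ⊤ := by
  obtain ⟨M, hM⟩ := hf
  refine setLIntegral_lt_top_of_le_nnreal hs.ne ⟨Real.toNNReal (M ^ 2), fun x hx => ?_⟩
  exact ENNReal.ofReal_le_ofReal (pow_le_pow_left₀ (norm_nonneg _) (hM x hx) 2)

section FunctionalValued

variable {n : ℕ} {E : Type*} [NormedAddCommGroup E] [NormedSpace ℂ E] {D : Set E}

theorem differentiableOn_tsum_mul_of_xiAct {ξ : E → (Fin n → ℕ) → ℂ}
    (hyp : ∀ r > 0, ∀ F : (Fin n → ℂ) → ℂ, DifferentiableOn ℂ F (Metric.ball 0 r) →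
      (∃ M, ∀ z ∈ Metric.ball (0 : Fin n → ℂ) r, ‖F z‖ ≤ M) →
      DifferentiableOn ℂ (fun w => xiAct (ξ w) F 0) D)
    {c : (Fin n → ℕ) → ℂ} {C ρ : ℝ} (hc : ∀ α, ‖c α‖ ≤ C) (hρ : 0 < ρ) :
    DifferentiableOn ℂ (fun w => ∑' α, ξ w α * (ρ : ℂ) ^ mdeg α * c α) D := by
  obtain ⟨r, hr, F, hF, hbdd, hact⟩ := exists_bounded_holomorphic_xiAct_eq hc hρ
  simpa only [hact] using hyp r hr F hF hbdd

theorem statement5_general (ξ : E → (Fin n → ℕ) → ℂ) (hmem : ∀ w ∈ D, MemL1 (ξ w))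
    (hyp : ∀ r > 0, ∀ F : (Fin n → ℂ) → ℂ, DifferentiableOn ℂ F (Metric.ball 0 r) →
      (∃ M, ∀ z ∈ Metric.ball (0 : Fin n → ℂ) r, ‖F z‖ ≤ M) →
      DifferentiableOn ℂ (fun w => xiAct (ξ w) F 0) D) :
    (∀ α, DifferentiableOn ℂ (fun w => ξ w α) D) ∧
      ∀ w ∈ D, ∀ ρ : ℝ, 0 < ρ → ∃ V ∈ 𝓝 w, ∃ C : ℝ, ∀ w' ∈ V ∩ D,
        (∑' α, ENNReal.ofReal (‖ξ w' α‖ * ρ ^ mdeg α)) ≤ ENNReal.ofReal C := by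
  refine ⟨differentiableOn_apply_of_tsum_mul fun c C hc => by
    simpa using differentiableOn_tsum_mul_of_xiAct hyp hc one_pos, fun w₀ hw₀ ρ hρ => ?_⟩
  have hnorm (w : E) (α : Fin n → ℕ) : ‖ξ w α * (ρ : ℂ) ^ mdeg α‖ = ‖ξ w α‖ * ρ ^ mdeg α := by
    rw [norm_mul, norm_pow, Complex.norm_real, Real.norm_of_nonneg hρ.le]
  obtain ⟨V, hV, C, hC⟩ := exists_nhds_tsum_norm_le_of_continuousOn
    (a := fun w α => ξ w α * (ρ : ℂ) ^ mdeg α)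
    (fun w hw => by simpa only [hnorm] using hmem w hw ρ hρ)
    (fun c C hc => (differentiableOn_tsum_mul_of_xiAct hyp hc hρ).continuousOn) hw₀
  refine ⟨V, hV, C, fun w hw => ?_⟩
  rw [← ENNReal.ofReal_tsum_of_nonneg (fun α => by positivity) (hmem w hw.2 ρ hρ)]
  simpa only [hnorm] using ENNReal.ofReal_le_ofReal (hC w hw)

end FunctionalValued

/-- If `w ↦ (ξ(w)·F)(z₀)` is holomorphic on `D` for every square-integrable holomorphic `F`
on every bounded domain `Ω' ⊆ ℂⁿ` and every `z₀ ∈ Ω'`, then `ξ(·)` is holomorphic and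
satisfies the locally uniformly bounded property on `D`. -/
theorem statement5 {n m : ℕ} (D : Set (Fin m → ℂ)) (hDo : IsOpen D) (hDc : IsConnected D)
    (ξ : (Fin m → ℂ) → (Fin n → ℕ) → ℂ) (hmem : ∀ w ∈ D, MemL1 (ξ w))
    (hyp : ∀ Ω' : Set (Fin n → ℂ), IsOpen Ω' → Bornology.IsBounded Ω' → IsConnected Ω' →
      ∀ z₀ ∈ Ω', ∀ F : (Fin n → ℂ) → ℂ, DifferentiableOn ℂ F Ω' →
        (∫⁻ x in Ω', ENNReal.ofReal (‖F x‖ ^ 2)) < ⊤ →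
        DifferentiableOn ℂ (fun w => xiAct (ξ w) F z₀) D) :
    (∀ α : Fin n → ℕ, DifferentiableOn ℂ (fun w => ξ w α) D) ∧ LocUnifBdd ξ D :=
  statement5_general ξ hmem fun _ hr F hF hbdd =>
    hyp _ Metric.isOpen_ball Metric.isBounded_ball (Metric.isConnected_ball hr) 0
      (Metric.mem_ball_self hr) F hF (setLIntegral_norm_sq_lt_top measure_ball_lt_top hbdd)
end
end
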